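/- arXiv:1204.6692 — 2 statements merged into one kernel-verified Lean document; each statement's English description precedes it below -/
import Mathlib

section
/- If f = x^n + a_{n-1}x^{n-1} + ⋯ + a_1 x + 1 ∈ F_2[x] is a monic irreducible polynomial of degree n ≥ 1 with constant term 1 such that a_{n-1} = a_1 = 1, then f^Q is a self-reciprocal irreducible polynomial of degree 2n over F_2. -/
open Polynomial

noncomputable def Qtrans (f : Polynomial (ZMod 2)) : Polynomial (ZMod 2) :=
  ∑ i ∈ Finset.range (f.natDegree + 1),
    C (f.coeff i) * X ^ (f.natDegree - i) * (X ^ 2 + 1) ^ i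

/-!
Let `K` be a finite field of characteristic two and `f` irreducible over `K` with a root
`b = a + a⁻¹`, where `a` lies in an extension `L` of `K` with `[L : K] = deg f`. In characteristic
two, `b⁻¹ = z ^ 2 + z` for `z = (a + 1)⁻¹`, so `b⁻¹` has absolute trace zero, as `z` and `z ^ 2` are
conjugate. But `b` generates `L`, so the trace of `b⁻¹` from `L` to `K` can be read off from the
reciprocal of `f`: it is `-f₁ / f₀`. If `f₁ / f₀` has nonzero absolute trace, there is thus no such
`a`, and the degree of every irreducible factor of `f^Q`, a multiple of `deg f`, is at least
`2 * deg f = deg f^Q`.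
-/

section CommSemiring

variable {R : Type*} [CommSemiring R]

/-- The Q-transform `f^Q = x ^ n * f (x + x⁻¹)` of a polynomial `f` of degree `n`, over an arbitrary
commutative semiring; over `ZMod 2` it is `Qtrans`. -/
noncomputable def qTransform (f : R[X]) : R[X] :=
  ∑ i ∈ Finset.range (f.natDegree + 1),
    C (f.coeff i) * X ^ (f.natDegree - i) * (X ^ 2 + 1) ^ i

lemma aeval_qTransform {A : Type*} [CommSemiring A] [Algebra R A] (f : R[X]) {a b : A}
    (hab : a ^ 2 + 1 = a * b) :
    aeval a (qTransform f) = a ^ f.natDegree * aeval b f := by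
  rw [qTransform, map_sum, aeval_eq_sum_range, Finset.mul_sum]
  refine Finset.sum_congr rfl fun i hi ↦ ?_
  have hpow : a ^ f.natDegree = a ^ (f.natDegree - i) * a ^ i :=
    (pow_sub_mul_pow a (Finset.mem_range_succ_iff.mp hi)).symm
  simp only [map_mul, map_pow, map_add, map_one, aeval_C, aeval_X, Algebra.smul_def]
  rw [hab, mul_pow, hpow]
  ring

lemma coeff_zero_qTransform (f : R[X]) : (qTransform f).coeff 0 = f.leadingCoeff := by
  rw [coeff_zero_eq_eval_zero, qTransform, eval_finsetSum,
    Finset.sum_eq_single_of_mem f.natDegree (Finset.self_mem_range_succ _)]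
  · simp
  · intro i hi hne
    have : f.natDegree - i ≠ 0 := by grind
    simp [this]

lemma natDegree_X_sq_add_one_pow_le (i : ℕ) : ((X ^ 2 + 1 : R[X]) ^ i).natDegree ≤ 2 * i := by
  rw [mul_comm]
  exact natDegree_pow_le_of_le i (by compute_degree)

lemma natDegree_qTransform_le (f : R[X]) : (qTransform f).natDegree ≤ 2 * f.natDegree := by
  refine natDegree_sum_le_of_forall_le _ _ fun i hi ↦ ?_
  have hmonomial := natDegree_C_mul_X_pow_le (f.coeff i) (f.natDegree - i)
  refine (natDegree_mul_le_of_le hmonomial (natDegree_X_sq_add_one_pow_le i)).trans ?_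
  grind

lemma reflect_finset_sum {ι : Type*} (N : ℕ) (s : Finset ι) (g : ι → R[X]) :
    reflect N (∑ i ∈ s, g i) = ∑ i ∈ s, reflect N (g i) := by
  ext k
  simp only [coeff_reflect, finsetSum_coeff]

lemma reflect_X_sq_add_one_pow (i : ℕ) :
    reflect (2 * i) ((X ^ 2 + 1 : R[X]) ^ i) = (X ^ 2 + 1) ^ i := by
  induction i with
  | zero => simp
  | succ k ih =>
    have hbase : reflect 2 (X ^ 2 + 1 : R[X]) = X ^ 2 + 1 := by
      rw [reflect_add, reflect_monomial, reflect_one, revAt_le le_rfl, Nat.sub_self, pow_zero,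
        add_comm]
    rw [pow_succ, Nat.mul_succ,
      reflect_mul _ _ (natDegree_X_sq_add_one_pow_le k) (by compute_degree), ih, hbase]

lemma reflect_qTransform (f : R[X]) : reflect (2 * f.natDegree) (qTransform f) = qTransform f := by
  rw [qTransform, reflect_finset_sum]
  refine Finset.sum_congr rfl fun i hi ↦ ?_
  have hsplit : 2 * f.natDegree = 2 * (f.natDegree - i) + 2 * i := by grind
  have hX : reflect (2 * (f.natDegree - i)) (X ^ (f.natDegree - i) : R[X]) =
      X ^ (f.natDegree - i) := by
    rw [reflect_monomial, revAt_le (by lia)]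
    congr 1
    lia
  rw [mul_assoc, reflect_C_mul, hsplit,
    reflect_mul _ _ ((natDegree_X_pow_le _).trans (by lia)) (natDegree_X_sq_add_one_pow_le i),
    hX, reflect_X_sq_add_one_pow]

lemma natDegree_qTransform (f : R[X]) : (qTransform f).natDegree = 2 * f.natDegree := by
  rcases eq_or_ne f 0 with rfl | hf
  · simp [qTransform]
  refine natDegree_eq_of_le_of_coeff_ne_zero (natDegree_qTransform_le f) ?_
  rw [← reflect_qTransform, coeff_reflect, revAt_le le_rfl, Nat.sub_self, coeff_zero_qTransform]
  exact leadingCoeff_ne_zero.mpr hf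

lemma reverse_qTransform (f : R[X]) : (qTransform f).reverse = qTransform f := by
  rw [reverse, natDegree_qTransform, reflect_qTransform]

end CommSemiring

section Field

variable {K L : Type*} [Field K] [Field L] [Algebra K L]

lemma irreducible_mirror_iff {f : K[X]} : Irreducible f.mirror ↔ Irreducible f :=
  let mirrorEquiv : K[X] ≃* K[X] :=
    { mirror_involutive.toPerm with map_mul' := fun p q ↦ mirror_mul_of_domain p q }
  MulEquiv.irreducible_iff mirrorEquiv

lemma mirror_eq_reverse {f : K[X]} (h0 : f.coeff 0 ≠ 0) : f.mirror = f.reverse := by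
  rw [mirror, natTrailingDegree_eq_zero.mpr (.inr h0), pow_zero, mul_one]

lemma nextCoeff_reverse {f : K[X]} (h0 : f.coeff 0 ≠ 0) : f.reverse.nextCoeff = f.coeff 1 := by
  have hrev : f.reverse.coeff 0 ≠ 0 := by
    rw [coeff_zero_reverse, leadingCoeff_ne_zero]
    rintro rfl
    exact h0 (coeff_zero 0)
  rw [← coeff_one_reverse, ← mirror_eq_reverse hrev, ← mirror_eq_reverse h0, mirror_mirror]

lemma natDegree_minpoly_of_irreducible {f : K[X]} (hf : Irreducible f) {b : L}
    (hb : aeval b f = 0) : (minpoly K b).natDegree = f.natDegree := by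
  rw [← minpoly.eq_of_irreducible hf hb, natDegree_mul_leadingCoeff_inv _ hf.ne_zero]

lemma trace_eq_neg_nextCoeff_div_leadingCoeff {f : K[X]} (hf : Irreducible f) {b : L}
    (hb : aeval b f = 0) (hL : Module.finrank K L = f.natDegree) :
    Algebra.trace K L b = -(f.nextCoeff / f.leadingCoeff) := by
  have : FiniteDimensional K L := .of_finrank_pos (hL ▸ hf.natDegree_pos)
  have hgen : IntermediateField.adjoin K {b} = ⊤ :=
    (Field.primitive_element_iff_minpoly_natDegree_eq K b).mpr
      ((natDegree_minpoly_of_irreducible hf hb).trans hL.symm)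
  rw [trace_eq_finrank_mul_minpoly_nextCoeff, hgen, IntermediateField.finrank_top,
    ← minpoly.eq_of_irreducible hf hb, nextCoeff_mul_C, div_eq_mul_inv, Nat.cast_one, one_mul]

lemma trace_inv_eq_neg_coeff_one_div_coeff_zero {f : K[X]} (hf : Irreducible f)
    (h0 : f.coeff 0 ≠ 0) {b : L} (hb : aeval b f = 0) (hL : Module.finrank K L = f.natDegree) :
    Algebra.trace K L b⁻¹ = -(f.coeff 1 / f.coeff 0) := by
  have hb0 : b ≠ 0 := by
    rintro rfl
    rw [← coeff_zero_eq_aeval_zero', map_eq_zero] at hb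
    exact h0 hb
  have hrev : Irreducible f.reverse := by
    rwa [← mirror_eq_reverse h0, irreducible_mirror_iff]
  have hroot : aeval b⁻¹ f.reverse = 0 := by
    let : Invertible b := invertibleOfNonzero hb0
    rw [← invOf_eq_inv]
    exact (eval₂_reverse_eq_zero_iff _ b f).mpr hb
  have htrailing : f.natTrailingDegree = 0 := natTrailingDegree_eq_zero.mpr (.inr h0)
  have hdeg : f.reverse.natDegree = f.natDegree := by rw [reverse_natDegree, htrailing, tsub_zero]
  rw [trace_eq_neg_nextCoeff_div_leadingCoeff hrev hroot (hL.trans hdeg.symm),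
    nextCoeff_reverse h0, reverse_leadingCoeff, trailingCoeff, htrailing]

lemma aeval_add_inv_of_aeval_qTransform {f : K[X]} (hf : f ≠ 0) {a : L}
    (ha : aeval a (qTransform f) = 0) : aeval (a + a⁻¹) f = 0 := by
  have ha0 : a ≠ 0 := by
    rintro rfl
    rw [← coeff_zero_eq_aeval_zero', coeff_zero_qTransform, map_eq_zero] at ha
    exact leadingCoeff_ne_zero.mpr hf ha
  rw [aeval_qTransform f (b := a + a⁻¹) (by field_simp)] at ha
  exact (mul_eq_zero.mp ha).resolve_left (pow_ne_zero _ ha0)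

end Field

theorem irreducible_qTransform_of_forall_finrank_ne.{u} {K : Type u} [Field K] {f : K[X]}
    (hf : Irreducible f)
    (h : ∀ (L : Type u) [Field L] [Algebra K L] (a : L),
      aeval (a + a⁻¹) f = 0 → Module.finrank K L ≠ f.natDegree) :
    Irreducible (qTransform f) := by
  have hpos := hf.natDegree_pos
  have hQ : 0 < (qTransform f).natDegree := by rw [natDegree_qTransform]; lia
  have hQ0 : qTransform f ≠ 0 := ne_zero_of_natDegree_gt hQ
  obtain ⟨g, hg, hgQ⟩ :=
    WfDvdMonoid.exists_irreducible_factor (not_isUnit_of_natDegree_pos _ hQ) hQ0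
  have : Fact (Irreducible g) := ⟨hg⟩
  have hfinrank : Module.finrank K (AdjoinRoot g) = g.natDegree :=
    finrank_quotient_span_eq_natDegree
  have : FiniteDimensional K (AdjoinRoot g) := .of_finrank_pos (hfinrank ▸ hg.natDegree_pos)
  have hroot : aeval (AdjoinRoot.root g + (AdjoinRoot.root g)⁻¹) f = 0 :=
    aeval_add_inv_of_aeval_qTransform hf.ne_zero <| by
      rwa [AdjoinRoot.aeval_eq, AdjoinRoot.mk_eq_zero]
  have hdvd : f.natDegree ∣ g.natDegree := by
    rw [← hfinrank, ← natDegree_minpoly_of_irreducible hf hroot]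
    exact minpoly.degree_dvd (.of_finite K _)
  have hne : g.natDegree ≠ f.natDegree := hfinrank ▸ h _ _ hroot
  have hle : 2 * f.natDegree ≤ g.natDegree := by
    obtain ⟨k, hk⟩ := hdvd
    have hk0 : k ≠ 0 := by rintro rfl; exact hg.natDegree_pos.ne' hk
    have hk1 : k ≠ 1 := by rintro rfl; exact hne (by rw [hk, mul_one])
    rw [hk, mul_comm]
    exact Nat.mul_le_mul_left _ (by lia)
  exact (associated_of_dvd_of_natDegree_le hgQ hQ0
    ((natDegree_qTransform f).trans_le hle)).irreducible hg

section CharTwo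

lemma trace_pow_card_eq_trace {K L : Type*} [Field K] [Fintype K] [Field L] [Algebra K L]
    [Algebra.IsAlgebraic K L] (x : L) :
    Algebra.trace K L (x ^ Fintype.card K) = Algebra.trace K L x :=
  Algebra.trace_eq_of_algEquiv (FiniteField.frobeniusAlgEquivOfAlgebraic K L) x

lemma inv_add_inv_eq_sq_add_self {L : Type*} [Field L] [CharP L 2] (a : L) :
    (a + a⁻¹)⁻¹ = (a + 1)⁻¹ ^ 2 + (a + 1)⁻¹ := by
  rcases eq_or_ne a 0 with rfl | ha
  · simp [CharTwo.add_self_eq_zero]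
  rcases eq_or_ne (a + 1) 0 with ha1 | ha1
  · obtain rfl : a = 1 := CharTwo.add_eq_zero.mp ha1
    simp [CharTwo.add_self_eq_zero]
  have hsum : a + a⁻¹ = (a + 1) ^ 2 / a := by
    rw [CharTwo.add_sq]
    field_simp
  have htwo : (2 : L) = 0 := CharTwo.two_eq_zero
  rw [hsum]
  field_simp
  linear_combination -htwo

lemma trace_inv_add_inv {L : Type*} [Field L] [Algebra (ZMod 2) L]
    [Algebra.IsAlgebraic (ZMod 2) L] (a : L) : Algebra.trace (ZMod 2) L (a + a⁻¹)⁻¹ = 0 := by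
  have : CharP L 2 := charP_of_injective_algebraMap (algebraMap (ZMod 2) L).injective 2
  have hfrob := trace_pow_card_eq_trace (K := ZMod 2) (a + 1)⁻¹
  rw [ZMod.card] at hfrob
  rw [inv_add_inv_eq_sq_add_self, map_add, hfrob, CharTwo.add_self_eq_zero]

variable {K : Type*} [Field K] [Algebra (ZMod 2) K] [FiniteDimensional (ZMod 2) K]

lemma finrank_ne_of_aeval_add_inv_eq_zero {L : Type*} [Field L] [Algebra K L] {f : K[X]}
    (hf : Irreducible f) (htr : Algebra.trace (ZMod 2) K (f.coeff 1 / f.coeff 0) ≠ 0) {a : L}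
    (ha : aeval (a + a⁻¹) f = 0) : Module.finrank K L ≠ f.natDegree := by
  intro hL
  have h0 : f.coeff 0 ≠ 0 := fun h ↦ htr (by rw [h, div_zero, map_zero])
  have : FiniteDimensional K L := .of_finrank_pos (hL ▸ hf.natDegree_pos)
  let : Algebra (ZMod 2) L := ((algebraMap K L).comp (algebraMap (ZMod 2) K)).toAlgebra
  have : IsScalarTower (ZMod 2) K L := .of_algebraMap_eq fun _ ↦ rfl
  have : FiniteDimensional (ZMod 2) L := .trans (ZMod 2) K L
  apply htr
  rw [← neg_eq_zero, ← map_neg, ← trace_inv_eq_neg_coeff_one_div_coeff_zero hf h0 ha hL,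
    Algebra.trace_trace, trace_inv_add_inv]

theorem irreducible_qTransform {f : K[X]} (hf : Irreducible f)
    (htr : Algebra.trace (ZMod 2) K (f.coeff 1 / f.coeff 0) ≠ 0) : Irreducible (qTransform f) :=
  irreducible_qTransform_of_forall_finrank_ne hf fun _ _ _ _ ha ↦
    finrank_ne_of_aeval_add_inv_eq_zero hf htr ha

/-- As `x / 0 = 0`, the trace condition also forces `f.coeff 0 ≠ 0`. -/
theorem stmt_14_general {f : K[X]} (hf : Irreducible f)
    (htr : Algebra.trace (ZMod 2) K (f.coeff 1 / f.coeff 0) ≠ 0) :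
    Irreducible (qTransform f) ∧ (qTransform f).natDegree = 2 * f.natDegree ∧
      (qTransform f).reverse = qTransform f :=
  ⟨irreducible_qTransform hf htr, natDegree_qTransform f, reverse_qTransform f⟩

end CharTwo

theorem stmt_14 (n : ℕ) (hn : 1 ≤ n) (f : Polynomial (ZMod 2))
    (hmon : f.Monic) (hirr : Irreducible f) (hdeg : f.natDegree = n)
    (h0 : f.coeff 0 = 1) (hA : f.coeff (n - 1) = 1 ∧ f.coeff 1 = 1) :
    Irreducible (Qtrans f) ∧ (Qtrans f).natDegree = 2 * n ∧
      (Qtrans f).reverse = Qtrans f :=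
  hdeg ▸ stmt_14_general hirr (by simp [h0, hA.2])
end

section
/- If f ∈ F_2[x] is a monic irreducible polynomial of type (A,n) for some n ≥ 1, then f^Q is a monic irreducible polynomial of degree 2n of type (A,2n); consequently, the sequence defined by f_0 = f and f_{i+1} = f_i^Q consists entirely of irreducible polynomials, with deg f_i = 2^i · n. -/
open Polynomial

/-!
Let `b` be a root of `f^Q`, so that `a = b + b⁻¹` is a root of `f`. Then `1 / a = y + y ^ 2` with
`y = 1 / (b + 1)`, so if `b` lay in `𝔽₂(a)` the trace of `1 / a` from `𝔽₂(a)` would vanish. But that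
trace is `a₁ / a₀`, read off from the minimal polynomial `f` of `a`. Hence `a₁ = 1` forces
`b ∉ 𝔽₂(a)`, so `b` has degree at least `2n`, the degree of `f^Q`. Type (A) persists because `f^Q`
is self-reciprocal and its linear coefficient is the subleading coefficient of `f`.
-/

open IntermediateField

section SimpleExtension

variable {K L : Type*} [Field K] [Field L] [Algebra K L] {x y : L}

lemma adjoin_simple_inv (x : L) : K⟮x⁻¹⟯ = K⟮x⟯ := by
  apply le_antisymm <;> rw [adjoin_simple_le_iff]
  · exact inv_mem (mem_adjoin_simple_self K x)
  · simpa only [inv_inv] using inv_mem (mem_adjoin_simple_self K x⁻¹)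

lemma natDegree_minpoly_inv (hx : IsIntegral K x) :
    (minpoly K x⁻¹).natDegree = (minpoly K x).natDegree := by
  rw [← adjoin.finrank hx, ← adjoin.finrank hx.inv, adjoin_simple_inv]

lemma two_mul_natDegree_minpoly_le (hx : IsIntegral K x) (hy : y ∈ K⟮x⟯) (hxy : x ∉ K⟮y⟯) :
    2 * (minpoly K y).natDegree ≤ (minpoly K x).natDegree := by
  have : FiniteDimensional K K⟮x⟯ := adjoin.finiteDimensional hx
  have hle : K⟮y⟯ ≤ K⟮x⟯ := adjoin_simple_le_iff.mpr hy
  have hyi : IsIntegral K y := isIntegral_iff.mp (IsIntegral.of_finite K (⟨y, hy⟩ : K⟮x⟯))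
  obtain ⟨m, hm⟩ := finrank_dvd_of_le_right hle
  have hm0 : m ≠ 0 := by
    rintro rfl
    exact Module.finrank_pos.ne' hm
  have hm1 : m ≠ 1 := by
    rintro rfl
    rw [mul_one] at hm
    exact hxy (eq_of_le_of_finrank_eq hle hm.symm ▸ mem_adjoin_simple_self K x)
  rw [← adjoin.finrank hx, ← adjoin.finrank hyi, hm, mul_comm]
  exact Nat.mul_le_mul_left _ (by lia)

lemma reverse_minpoly_inv (hx : IsIntegral K x) (hx0 : x ≠ 0) :
    (minpoly K x⁻¹).reverse = C ((minpoly K x).coeff 0)⁻¹ * minpoly K x := by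
  set q := (minpoly K x⁻¹).reverse with hq
  have hroot : aeval x q = 0 := by
    let := invertibleOfNonzero (inv_ne_zero hx0)
    have h := (eval₂_reverse_eq_zero_iff (algebraMap K L) x⁻¹ _).mpr (minpoly.aeval K x⁻¹)
    rwa [invOf_eq_inv, inv_inv] at h
  have hdeg : q.natDegree ≤ (minpoly K x).natDegree :=
    (reverse_natDegree_le _).trans_eq (natDegree_minpoly_inv hx)
  have hmul : q = C q.leadingCoeff * minpoly K x :=
    eq_leadingCoeff_mul_of_monic_of_dvd_of_natDegree_le (minpoly.monic hx)
      (minpoly.dvd K x hroot) hdeg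
  have hlead : q.leadingCoeff * (minpoly K x).coeff 0 = 1 := by
    rw [← coeff_C_mul, ← hmul, hq, coeff_zero_reverse, (minpoly.monic hx.inv).leadingCoeff]
  rw [hmul, eq_inv_of_mul_eq_one_left hlead]

lemma nextCoeff_minpoly_inv (hx : IsIntegral K x) (hx0 : x ≠ 0) :
    (minpoly K x⁻¹).nextCoeff = (minpoly K x).coeff 1 / (minpoly K x).coeff 0 := by
  rw [← coeff_one_reverse, reverse_minpoly_inv hx hx0, coeff_C_mul, inv_mul_eq_div]

lemma trace_inv [FiniteDimensional K L] (hx0 : x ≠ 0) :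
    Algebra.trace K L x⁻¹ =
      Module.finrank K⟮x⟯ L * -((minpoly K x).coeff 1 / (minpoly K x).coeff 0) := by
  rw [trace_eq_finrank_mul_minpoly_nextCoeff, nextCoeff_minpoly_inv (.of_finite K x) hx0,
    adjoin_simple_inv]

lemma trace_adjoinSimple_gen_inv (hx : IsIntegral K x) (hx0 : x ≠ 0) :
    Algebra.trace K K⟮x⟯ (AdjoinSimple.gen K x)⁻¹ =
      -((minpoly K x).coeff 1 / (minpoly K x).coeff 0) := by
  have : FiniteDimensional K K⟮x⟯ := adjoin.finiteDimensional hx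
  have htop : K⟮AdjoinSimple.gen K x⟯ = ⊤ := by
    rw [Field.primitive_element_iff_minpoly_natDegree_eq, minpoly_gen, adjoin.finrank hx]
  have hgen : AdjoinSimple.gen K x ≠ 0 := fun h => hx0 (congrArg Subtype.val h)
  rw [trace_inv hgen, minpoly_gen, htop, IntermediateField.finrank_top, Nat.cast_one, one_mul]

end SimpleExtension

lemma trace_pow_card (K : Type*) {L : Type*} [Field K] [Fintype K] [Field L] [Algebra K L]
    [Algebra.IsAlgebraic K L] (x : L) :
    Algebra.trace K L (x ^ Fintype.card K) = Algebra.trace K L x :=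
  Algebra.trace_eq_of_algEquiv (FiniteField.frobeniusAlgEquivOfAlgebraic K L) x

lemma add_inv_inv_eq_sq_add_self {L : Type*} [Field L] [CharP L 2] (b : L) :
    (b + b⁻¹)⁻¹ = (b + 1)⁻¹ ^ 2 + (b + 1)⁻¹ := by
  have h2 : (2 : L) = 0 := CharTwo.two_eq_zero
  by_cases hb : b = 0
  · simp [hb, CharTwo.add_self_eq_zero]
  by_cases hb1 : b = 1
  · simp [hb1, CharTwo.add_self_eq_zero]
  have hb1' : b + 1 ≠ 0 := by rwa [Ne, CharTwo.add_eq_zero]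
  have hab : b + b⁻¹ = (b + 1) ^ 2 / b := by
    field_simp
    linear_combination -b * h2
  rw [hab]
  field_simp
  linear_combination -h2

lemma trace_add_inv_inv_eq_zero {L : Type*} [Field L] [Algebra (ZMod 2) L]
    [Algebra.IsAlgebraic (ZMod 2) L] (b : L) :
    Algebra.trace (ZMod 2) L (b + b⁻¹)⁻¹ = 0 := by
  have : CharP L 2 := charP_of_injective_algebraMap (algebraMap (ZMod 2) L).injective 2
  have hsq := trace_pow_card (ZMod 2) (b + 1)⁻¹
  rw [ZMod.card] at hsq
  rw [add_inv_inv_eq_sq_add_self, map_add, hsq, CharTwo.add_self_eq_zero]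

lemma notMem_adjoin_add_inv {L : Type*} [Field L] [Algebra (ZMod 2) L] {b : L}
    (hb : IsIntegral (ZMod 2) b) (ha : b + b⁻¹ ≠ 0)
    (h1 : (minpoly (ZMod 2) (b + b⁻¹)).coeff 1 ≠ 0) : b ∉ (ZMod 2)⟮b + b⁻¹⟯ := by
  intro hmem
  have hint : IsIntegral (ZMod 2) (b + b⁻¹) := hb.add hb.inv
  have : FiniteDimensional (ZMod 2) (ZMod 2)⟮b + b⁻¹⟯ := adjoin.finiteDimensional hint
  have htrace := trace_adjoinSimple_gen_inv hint ha
  have hgen : AdjoinSimple.gen (ZMod 2) (b + b⁻¹) = ⟨b, hmem⟩ + ⟨b, hmem⟩⁻¹ := rfl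
  rw [hgen, trace_add_inv_inv_eq_zero, eq_comm, neg_eq_zero] at htrace
  exact div_ne_zero h1 (minpoly.coeff_zero_ne_zero hint ha) htrace

section

variable {R : Type*} [Semiring R]

lemma reflect_pow {f : R[X]} {N : ℕ} (hf : f.natDegree ≤ N) (k : ℕ) :
    reflect (N * k) (f ^ k) = reflect N f ^ k := by
  induction k with
  | zero => simp
  | succ k ih =>
    rw [pow_succ, Nat.mul_succ, reflect_mul _ _ _ hf, ih, pow_succ]
    exact natDegree_pow_le_of_le k hf |>.trans_eq (mul_comm _ _)

lemma reflect_sum {ι : Type*} (s : Finset ι) (f : ι → R[X]) (N : ℕ) :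
    reflect N (∑ i ∈ s, f i) = ∑ i ∈ s, reflect N (f i) := by
  ext
  simp only [coeff_reflect, finsetSum_coeff]

lemma natDegree_X_sq_add_one_le : (X ^ 2 + 1 : R[X]).natDegree ≤ 2 := by compute_degree

lemma reflect_X_sq_add_one : reflect 2 (X ^ 2 + 1 : R[X]) = X ^ 2 + 1 := by
  rw [reflect_add, reflect_monomial, reflect_one, revAt_le le_rfl, Nat.sub_self, pow_zero, add_comm]

end

lemma coeff_one_X_sq_add_one_pow {R : Type*} [CommSemiring R] (k : ℕ) :
    ((X ^ 2 + 1 : R[X]) ^ k).coeff 1 = 0 := by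
  have h : (X ^ 2 + 1 : R[X]) ^ k = expand R 2 ((X + 1) ^ k) := by simp
  rw [h, coeff_expand two_pos, if_neg (by decide)]

section Qtrans

variable (f : (ZMod 2)[X])

lemma natDegree_Qtrans_le : (Qtrans f).natDegree ≤ 2 * f.natDegree := by
  refine natDegree_sum_le_of_forall_le _ _ fun i hi => ?_
  have hX := natDegree_C_mul_X_pow_le (f.coeff i) (f.natDegree - i)
  have hQ := natDegree_pow_le_of_le i (natDegree_X_sq_add_one_le (R := ZMod 2))
  have hi := Finset.mem_range_succ_iff.mp hi
  exact natDegree_mul_le.trans (by lia)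

lemma reflect_Qtrans : reflect (2 * f.natDegree) (Qtrans f) = Qtrans f := by
  rw [Qtrans, reflect_sum]
  refine Finset.sum_congr rfl fun i hi => ?_
  have hi := Finset.mem_range_succ_iff.mp hi
  have hN : 2 * f.natDegree = 2 * (f.natDegree - i) + 2 * i := by lia
  have hX : reflect (2 * (f.natDegree - i)) (X ^ (f.natDegree - i) : (ZMod 2)[X]) =
      X ^ (f.natDegree - i) := by
    rw [reflect_monomial, revAt_le (by lia)]
    congr 1
    lia
  rw [mul_assoc, reflect_C_mul, hN, reflect_mul, hX, reflect_pow natDegree_X_sq_add_one_le,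
    reflect_X_sq_add_one]
  · rw [natDegree_X_pow]
    lia
  · exact (natDegree_pow_le_of_le i natDegree_X_sq_add_one_le).trans_eq (mul_comm _ _)

lemma coeff_zero_Qtrans : (Qtrans f).coeff 0 = f.leadingCoeff := by
  rw [Qtrans, Finset.sum_range_succ, coeff_add, finsetSum_coeff, Finset.sum_eq_zero]
  · simp [coeff_zero_eq_eval_zero]
  · intro i hi
    have hi := Finset.mem_range.mp hi
    rw [mul_assoc, coeff_C_mul, coeff_X_pow_mul', if_neg (by lia), mul_zero]

lemma coeff_one_Qtrans : (Qtrans f).coeff 1 = f.nextCoeff := by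
  rw [Qtrans, Finset.sum_range_succ, coeff_add, finsetSum_coeff, Nat.sub_self, pow_zero, mul_one,
    coeff_C_mul, coeff_one_X_sq_add_one_pow, mul_zero, add_zero]
  rcases hn : f.natDegree with _ | m
  · simp [nextCoeff, hn]
  rw [nextCoeff_of_natDegree_pos (by lia), hn, Nat.add_sub_cancel, Finset.sum_range_succ,
    Finset.sum_eq_zero, zero_add]
  · simp [mul_assoc, coeff_zero_eq_eval_zero]
  · intro i hi
    have hi := Finset.mem_range.mp hi
    rw [mul_assoc, coeff_C_mul, coeff_X_pow_mul', if_neg (by lia), mul_zero]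

lemma natDegree_Qtrans : (Qtrans f).natDegree = 2 * f.natDegree := by
  rcases eq_or_ne f 0 with rfl | hf
  · simp [Qtrans]
  refine natDegree_eq_of_le_of_coeff_ne_zero (natDegree_Qtrans_le f) ?_
  rw [← reflect_Qtrans, coeff_reflect, revAt_le le_rfl, Nat.sub_self, coeff_zero_Qtrans]
  exact leadingCoeff_ne_zero.mpr hf

lemma natDegree_iterate_Qtrans (i : ℕ) : (Qtrans^[i] f).natDegree = 2 ^ i * f.natDegree := by
  induction i with
  | zero => simp
  | succ i ih => rw [Function.iterate_succ_apply', natDegree_Qtrans, ih, pow_succ', mul_assoc]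

lemma reverse_Qtrans : (Qtrans f).reverse = Qtrans f := by
  rw [reverse, natDegree_Qtrans, reflect_Qtrans]

lemma leadingCoeff_Qtrans : (Qtrans f).leadingCoeff = f.leadingCoeff := by
  rw [← coeff_zero_reverse, reverse_Qtrans, coeff_zero_Qtrans]

lemma nextCoeff_Qtrans : (Qtrans f).nextCoeff = f.nextCoeff := by
  rw [← coeff_one_reverse, reverse_Qtrans, coeff_one_Qtrans]

lemma aeval_Qtrans {L : Type*} [Field L] [Algebra (ZMod 2) L] {b : L} (hb : b ≠ 0) :
    aeval b (Qtrans f) = b ^ f.natDegree * aeval (b + b⁻¹) f := by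
  rw [Qtrans, aeval_eq_sum_range (p := f), map_sum, Finset.mul_sum]
  refine Finset.sum_congr rfl fun i hi => ?_
  have hpow : b ^ f.natDegree = b ^ (f.natDegree - i) * b ^ i :=
    (pow_sub_mul_pow b (Finset.mem_range_succ_iff.mp hi)).symm
  have hsq : b ^ 2 + 1 = b * (b + b⁻¹) := by field_simp
  simp only [map_mul, map_pow, map_add, aeval_X, aeval_C, map_one, hsq, mul_pow, hpow,
    Algebra.smul_def]
  ring

lemma aeval_add_inv_eq_zero_of_aeval_Qtrans {L : Type*} [Field L] [Algebra (ZMod 2) L] {b : L}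
    (hf : f ≠ 0) (hb : aeval b (Qtrans f) = 0) : aeval (b + b⁻¹) f = 0 := by
  have hb0 : b ≠ 0 := by
    rintro rfl
    rw [← coeff_zero_eq_aeval_zero', coeff_zero_Qtrans, map_eq_zero] at hb
    exact leadingCoeff_ne_zero.mpr hf hb
  rw [aeval_Qtrans f hb0] at hb
  exact (mul_eq_zero.mp hb).resolve_left (pow_ne_zero _ hb0)

end Qtrans

lemma irreducible_Qtrans {f : (ZMod 2)[X]} (hmon : f.Monic) (hirr : Irreducible f)
    (h0 : f.coeff 0 ≠ 0) (h1 : f.coeff 1 ≠ 0) : Irreducible (Qtrans f) := by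
  have hQmon : (Qtrans f).Monic := (leadingCoeff_Qtrans f).trans hmon
  have hQdeg : (Qtrans f).degree ≠ 0 :=
    degree_ne_of_natDegree_ne <| by
      rw [natDegree_Qtrans]
      exact mul_ne_zero two_ne_zero hirr.natDegree_pos.ne'
  obtain ⟨b, hb⟩ := IsAlgClosed.exists_aeval_eq_zero (AlgebraicClosure (ZMod 2)) (Qtrans f) hQdeg
  have hbi : IsIntegral (ZMod 2) b := ⟨_, hQmon, hb⟩
  have haf : aeval (b + b⁻¹) f = 0 := aeval_add_inv_eq_zero_of_aeval_Qtrans f hirr.ne_zero hb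
  have ha0 : b + b⁻¹ ≠ 0 := by
    intro ha
    rw [ha, ← coeff_zero_eq_aeval_zero'] at haf
    exact h0 ((map_eq_zero _).mp haf)
  have hmin : f = minpoly (ZMod 2) (b + b⁻¹) := minpoly.eq_of_irreducible_of_monic hirr haf hmon
  have hbK : b ∉ (ZMod 2)⟮b + b⁻¹⟯ := notMem_adjoin_add_inv hbi ha0 (hmin ▸ h1)
  have haK : b + b⁻¹ ∈ (ZMod 2)⟮b⟯ :=
    have hbb := mem_adjoin_simple_self (ZMod 2) b
    add_mem hbb (inv_mem hbb)
  have hdeg : (Qtrans f).natDegree ≤ (minpoly (ZMod 2) b).natDegree := by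
    rw [natDegree_Qtrans, hmin]
    exact two_mul_natDegree_minpoly_le hbi haK hbK
  rw [eq_of_monic_of_dvd_of_natDegree_le (minpoly.monic hbi) hQmon (minpoly.dvd _ b hb) hdeg]
  exact minpoly.irreducible hbi

/-- Monic irreducible polynomials of type (A, n), where n is the degree. The subleading coefficient
is expressed by `nextCoeff`, which is `0` in degree `0`. -/
structure IsTypeA (f : (ZMod 2)[X]) : Prop where
  monic : f.Monic
  irreducible : Irreducible f
  nextCoeff_eq_one : f.nextCoeff = 1
  coeff_one_eq_one : f.coeff 1 = 1

namespace IsTypeA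

variable {f : (ZMod 2)[X]}

lemma coeff_zero_ne_zero (hf : IsTypeA f) : f.coeff 0 ≠ 0 := by
  intro h0
  have hX : X = f := eq_of_monic_of_associated monic_X hf.monic
    (irreducible_X.associated_of_dvd hf.irreducible (X_dvd_iff.mpr h0))
  have hnext := hf.nextCoeff_eq_one
  simp [← hX, nextCoeff] at hnext

lemma qtrans (hf : IsTypeA f) : IsTypeA (Qtrans f) where
  monic := (leadingCoeff_Qtrans f).trans hf.monic
  irreducible := irreducible_Qtrans hf.monic hf.irreducible hf.coeff_zero_ne_zero
    (hf.coeff_one_eq_one ▸ one_ne_zero)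
  nextCoeff_eq_one := (nextCoeff_Qtrans f).trans hf.nextCoeff_eq_one
  coeff_one_eq_one := (coeff_one_Qtrans f).trans hf.nextCoeff_eq_one

lemma iterate_qtrans (hf : IsTypeA f) (i : ℕ) : IsTypeA (Qtrans^[i] f) :=
  Function.Iterate.rec IsTypeA hf (fun _ => qtrans) i

end IsTypeA

theorem stmt_15 (n : ℕ) (hn : 1 ≤ n) (f : Polynomial (ZMod 2))
    (hmon : f.Monic) (hirr : Irreducible f) (hdeg : f.natDegree = n)
    (hA : f.coeff (n - 1) = 1 ∧ f.coeff 1 = 1) :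
    ((Qtrans f).Monic ∧ Irreducible (Qtrans f) ∧ (Qtrans f).natDegree = 2 * n ∧
      (Qtrans f).coeff (2 * n - 1) = 1 ∧ (Qtrans f).coeff 1 = 1) ∧
    (∀ F : ℕ → Polynomial (ZMod 2), F 0 = f → (∀ i, F (i + 1) = Qtrans (F i)) →
      ∀ i, Irreducible (F i) ∧ (F i).natDegree = 2 ^ i * n) := by
  subst hdeg
  have hf : IsTypeA f := ⟨hmon, hirr, (nextCoeff_of_natDegree_pos hn).trans hA.1, hA.2⟩
  have hQ : IsTypeA (Qtrans f) := hf.qtrans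
  have hQdeg : (Qtrans f).natDegree = 2 * f.natDegree := natDegree_Qtrans f
  refine ⟨⟨hQ.monic, hQ.irreducible, hQdeg, ?_, hQ.coeff_one_eq_one⟩, fun F hF0 hF i => ?_⟩
  · rw [← hQdeg, ← nextCoeff_of_natDegree_pos (by lia), hQ.nextCoeff_eq_one]
  · have hiter : F i = Qtrans^[i] f := by
      induction i with
      | zero => exact hF0
      | succ i ih => rw [hF, ih, Function.iterate_succ_apply']
    rw [hiter]
    exact ⟨(hf.iterate_qtrans i).irreducible, natDegree_iterate_Qtrans f i⟩
end
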